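/- Let b > τ > 0 and α ≠ 0 be real numbers, and fix σ ∈ {1, −1}. For λ > 0 define the complex polynomial P_λ(s) = (s² + λ)·(τ s³ + s² + b λ s + λ) − α²·(1 + τ s). Then there exist constants C > 0 and Λ > 0 such that for every λ ≥ Λ there exists a root s ∈ ℂ of P_λ with |Re s + α²/(2(b−τ)λ²)| ≤ C·λ^{−5/2} and Re s < 0. In particular, along any sequence λ_k → ∞ these roots satisfy Re s_k → 0 with Re s_k < 0, so the real parts of the wave-branch roots approach the imaginary axis at rate λ_k^{−2}. -/

import Mathlib

/-!
Write `ω = √λ`, `B = b - τ` and `Q(s) = τ s³ + s² + b λ s + λ`. At `s = iω` the factor `s² + λ`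
vanishes and `Q(iω) = i B ω³`, so `P(iω) = -α² (1 + iτω) = O(ω)` while
`P'(iω) = -(2 B ω⁴ + α² τ)`. Since `P' / P = ∑ 1 / (s - r)` over the roots `r`, a polynomial of
degree at most `n` has a root within `(n + 1) |P / P'|` of any point
(`exists_root_near`); hence `P` has a root `s = iω + δ` with `|δ| ≤ K ω⁻³`.

Expanding `P(iω + δ) = 0` gives `2 B ω⁴ δ + α² (1 + iτω) = -α² τ δ + δ² · O(ω³) = O(ω⁻³)`
(`root_expansion`, `norm_expansion_le`). The term `iτω` is purely imaginary, so taking real parts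
yields `Re δ = -α² / (2 B ω⁴) + O(ω⁻⁷)`, which is stronger than the required error `O(ω⁻⁵)` and
forces `Re s = Re δ < 0` for large `ω`.
-/

open Polynomial in
/-- A complex polynomial of degree at most `n` has a root within `(n + 1) |p(z) / p'(z)|` of `z`:
otherwise every term of `p'(z) / p(z) = ∑ 1 / (z - r)` would be too small. (The sharp factor is
`n`; using `n + 1` avoids a strict inequality of sums.) -/
lemma exists_root_near (p : ℂ[X]) (n : ℕ) (hn : p.natDegree ≤ n) (z : ℂ)
    (hz : p.derivative.eval z ≠ 0) :
    ∃ r, p.eval r = 0 ∧ ‖r - z‖ * ‖p.derivative.eval z‖ ≤ (n + 1) * ‖p.eval z‖ := by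
  by_cases h0 : p.eval z = 0
  · exact ⟨z, h0, by simp [h0]⟩
  by_contra! hcon
  have hp : p ≠ 0 := by rintro rfl; simp at h0
  have key := (IsAlgClosed.splits p).eval_derivative_div_eval_of_ne_zero h0
  set t := ‖p.derivative.eval z‖ / ‖p.eval z‖ with ht
  have hA : 0 < ‖p.derivative.eval z‖ := norm_pos_iff.mpr hz
  have hB : 0 < ‖p.eval z‖ := norm_pos_iff.mpr h0
  have htpos : 0 < t := by positivity
  have hle : ∀ x ∈ (p.roots.map fun r => ‖1 / (z - r)‖), x ≤ t / (n + 1) := by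
    intro x hx
    obtain ⟨r, hr, rfl⟩ := Multiset.mem_map.mp hx
    have h1 := hcon r ((mem_roots hp).mp hr)
    have hpos : 0 < ‖z - r‖ := by
      rw [norm_pos_iff, sub_ne_zero]
      rintro rfl
      exact h0 ((mem_roots hp).mp hr)
    rw [norm_sub_rev] at h1
    rw [norm_div, norm_one, ht, div_div, div_le_div_iff₀ hpos (by positivity)]
    linarith
  have h2 := Multiset.sum_le_card_nsmul _ _ hle
  have h3 : t ≤ (p.roots.map fun r => ‖1 / (z - r)‖).sum := by
    rw [ht, ← norm_div, key]
    refine (norm_multiset_sum_le _).trans (le_of_eq ?_)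
    rw [Multiset.map_map]; rfl
  rw [Multiset.card_map, nsmul_eq_mul] at h2
  have h4 : (p.roots.card : ℝ) ≤ n := by exact_mod_cast (card_roots' p).trans hn
  have h5 : (p.roots.card : ℝ) * (t / (n + 1)) ≤ n * (t / (n + 1)) := by gcongr
  have h6 : (n : ℝ) * (t / (n + 1)) < t := by
    rw [← mul_div_assoc, div_lt_iff₀ (by positivity)]
    nlinarith
  linarith

open Polynomial in
/-- The root produced by `exists_root_near` at `iω`, in terms of its offset `d` from `iω`. -/
lemma exists_root_offset (τ b α w : ℝ) (hτ : 0 < τ) (hb : τ < b) (hw : 1 ≤ w) :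
    ∃ d : ℂ, ((Complex.I * w + d) ^ 2 + (w : ℂ) ^ 2) *
        (τ * (Complex.I * w + d) ^ 3 + (Complex.I * w + d) ^ 2
          + b * (w : ℂ) ^ 2 * (Complex.I * w + d) + (w : ℂ) ^ 2) -
      (α : ℂ) ^ 2 * (1 + τ * (Complex.I * w + d)) = 0 ∧
      ‖d‖ * w ^ 3 ≤ 3 * α ^ 2 * (1 + τ) / (b - τ) := by
  set p : ℂ[X] := (X ^ 2 + C ((w : ℂ) ^ 2)) *
    (C (τ : ℂ) * X ^ 3 + X ^ 2 + C (b * (w : ℂ) ^ 2) * X + C ((w : ℂ) ^ 2)) -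
    C ((α : ℂ) ^ 2) * (1 + C (τ : ℂ) * X) with hp
  have hdeg : p.natDegree ≤ 5 := by rw [hp]; compute_degree
  have hI3 : Complex.I ^ 3 = -Complex.I := by simp [pow_succ]
  have hd : p.derivative.eval (Complex.I * w) =
      ((-(2 * (b - τ) * w ^ 4 + α ^ 2 * τ) : ℝ) : ℂ) := by
    simp [hp, mul_pow, hI3, -map_pow, -map_mul]
    ring_nf
    simp
    ring
  have hv : p.eval (Complex.I * w) = -((α : ℂ) ^ 2 * (1 + τ * (Complex.I * w))) := by
    simp [hp, mul_pow]
  have hB : 0 < b - τ := sub_pos.mpr hb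
  have hpos : 0 < 2 * (b - τ) * w ^ 4 + α ^ 2 * τ := by positivity
  have hdn : ‖p.derivative.eval (Complex.I * w)‖ = 2 * (b - τ) * w ^ 4 + α ^ 2 * τ := by
    rw [hd, Complex.norm_real, norm_neg, Real.norm_of_nonneg hpos.le]
  have hvn : ‖p.eval (Complex.I * w)‖ ≤ α ^ 2 * ((1 + τ) * w) := by
    rw [hv, norm_neg, norm_mul, norm_pow, Complex.norm_real, Real.norm_eq_abs, sq_abs]
    gcongr
    refine (norm_add_le _ _).trans ?_
    simp [abs_of_pos hτ, abs_of_pos (zero_lt_one.trans_le hw)]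
    linarith
  obtain ⟨r, hr, hr2⟩ := exists_root_near p 5 hdeg (Complex.I * w)
    (by rw [← norm_pos_iff, hdn]; exact hpos)
  refine ⟨r - Complex.I * w, ?_, ?_⟩
  · rw [add_sub_cancel, ← hr]
    simp [hp]
  · rw [hdn] at hr2
    set x := ‖r - Complex.I * w‖
    have hx : 0 ≤ x := norm_nonneg _
    rw [le_div_iff₀ hB]
    have h1 : x * (2 * (b - τ) * w ^ 4) ≤ 6 * (α ^ 2 * ((1 + τ) * w)) := by
      have : 0 ≤ x * (α ^ 2 * τ) := by positivity
      push_cast at hr2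
      linarith
    have hw0 : 0 < w := by linarith
    have h2 : (2 * w) * (x * w ^ 3 * (b - τ)) ≤ (2 * w) * (3 * α ^ 2 * (1 + τ)) := by
      linarith
    exact le_of_mul_le_mul_left h2 (by positivity)

/-- The equation `P(iω + d) = 0` solved for its terms linear in `d`; here `E` is the difference
quotient `(Q(iω + d) - Q(iω)) / d`. -/
lemma root_expansion (τ b α w : ℝ) (d E : ℂ)
    (hE : E = (b - 3 * τ) * (w : ℂ) ^ 2 + 2 * Complex.I * w + (3 * τ * Complex.I * w + 1) * d
      + τ * d ^ 2)
    (h : ((Complex.I * w + d) ^ 2 + (w : ℂ) ^ 2) *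
        (τ * (Complex.I * w + d) ^ 3 + (Complex.I * w + d) ^ 2
          + b * (w : ℂ) ^ 2 * (Complex.I * w + d) + (w : ℂ) ^ 2) -
      (α : ℂ) ^ 2 * (1 + τ * (Complex.I * w + d)) = 0) :
    2 * (b - τ) * (w : ℂ) ^ 4 * d + (α : ℂ) ^ 2 * (1 + τ * Complex.I * w) =
      d ^ 2 * (Complex.I * (b - τ) * (w : ℂ) ^ 3 + 2 * Complex.I * w * E + d * E)
        - (α : ℂ) ^ 2 * τ * d := by
  have hI : Complex.I ^ 2 = -1 := Complex.I_sq
  have h1 : (Complex.I * w + d) ^ 2 + (w : ℂ) ^ 2 = d * (2 * Complex.I * w + d) := by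
    linear_combination (w : ℂ) ^ 2 * hI
  have h2 : τ * (Complex.I * w + d) ^ 3 + (Complex.I * w + d) ^ 2
      + b * (w : ℂ) ^ 2 * (Complex.I * w + d) + (w : ℂ) ^ 2 =
      Complex.I * (b - τ) * (w : ℂ) ^ 3 + d * E := by
    rw [hE]
    linear_combination (τ * Complex.I * (w : ℂ) ^ 3 + 3 * τ * (w : ℂ) ^ 2 * d + (w : ℂ) ^ 2) * hI
  rw [h1, h2] at h
  linear_combination -h + 2 * (b - τ) * (w : ℂ) ^ 4 * d * hI

/-- For `‖d‖ ≤ 1 ≤ ω` the coefficient of `d²` in `root_expansion` is `O(ω³)`. -/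
lemma norm_expansion_le (τ b w : ℝ) (d E : ℂ) (hτ : 0 < τ) (hb : τ < b) (hw : 1 ≤ w)
    (hd : ‖d‖ ≤ 1)
    (hE : E = (b - 3 * τ) * (w : ℂ) ^ 2 + 2 * Complex.I * w + (3 * τ * Complex.I * w + 1) * d
      + τ * d ^ 2) :
    ‖Complex.I * (b - τ) * (w : ℂ) ^ 3 + 2 * Complex.I * w * E + d * E‖ ≤
      ((b - τ) + 3 * (b + 7 * τ + 3)) * w ^ 3 := by
  have hw0 : 0 < w := by linarith
  have hw2 : w ≤ w ^ 2 := by nlinarith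
  have hb0 : 0 < b := by linarith
  have hn : |w| = w := abs_of_pos hw0
  have ht : |τ| = τ := abs_of_pos hτ
  have hbn : |b| = b := abs_of_pos hb0
  have hc : ‖(b : ℂ) - 3 * τ‖ ≤ b + 3 * τ := by
    refine (norm_sub_le _ _).trans ?_
    simp [ht, hbn]
  have hc' : ‖(b : ℂ) - τ‖ = b - τ := by
    rw [← Complex.ofReal_sub, Complex.norm_real, Real.norm_of_nonneg (by linarith)]
  have h3 : ‖3 * (τ : ℂ) * Complex.I * w + 1‖ ≤ 3 * τ * w + 1 := by
    refine (norm_add_le _ _).trans ?_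
    simp [ht, hn]
  have hEn : ‖E‖ ≤ (b + 7 * τ + 3) * w ^ 2 := by
    calc ‖E‖ ≤ ‖(b : ℂ) - 3 * τ‖ * w ^ 2 + 2 * w + ‖3 * (τ : ℂ) * Complex.I * w + 1‖ * ‖d‖
          + τ * ‖d‖ ^ 2 := by
          rw [hE]
          refine (norm_add₄_le).trans (le_of_eq ?_)
          simp [ht, hn]
      _ ≤ (b + 3 * τ) * w ^ 2 + 2 * w + (3 * τ * w + 1) * 1 + τ * 1 ^ 2 := by gcongr
      _ ≤ _ := by nlinarith
  calc _ ≤ (b - τ) * w ^ 3 + 2 * w * ‖E‖ + ‖d‖ * ‖E‖ := by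
        refine (norm_add₃_le).trans (le_of_eq ?_)
        simp [hn, hc']
    _ ≤ (b - τ) * w ^ 3 + 2 * w * ((b + 7 * τ + 3) * w ^ 2) + w * ((b + 7 * τ + 3) * w ^ 2) := by
        gcongr
        linarith
    _ = _ := by ring

/-- Absence of a uniform spectral gap: for b > τ > 0, α ≠ 0, σ = ±1, there are C, Λ > 0
such that for every λ ≥ Λ the polynomial
P_λ(s) = (s² + λ)(τs³ + s² + bλs + λ) − α²(1 + τs) has a root s with
|Re s + α²/(2(b−τ)λ²)| ≤ C λ^{−5/2} and Re s < 0. -/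
theorem stmt_18 (τ b α σ : ℝ) (hτ : 0 < τ) (hb : τ < b) (hα : α ≠ 0)
    (hσ : σ = 1 ∨ σ = -1) (P : ℝ → ℂ → ℂ)
    (hP : ∀ lam : ℝ, 0 < lam → ∀ s : ℂ, P lam s =
      (s ^ 2 + (lam : ℂ)) *
        ((τ : ℂ) * s ^ 3 + s ^ 2 + (b : ℂ) * (lam : ℂ) * s + (lam : ℂ)) -
      (α : ℂ) ^ 2 * (1 + (τ : ℂ) * s)) :
    ∃ C Λ : ℝ, 0 < C ∧ 0 < Λ ∧ ∀ lam : ℝ, Λ ≤ lam →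
      ∃ s : ℂ, P lam s = 0 ∧
        |s.re + α ^ 2 / (2 * (b - τ) * lam ^ 2)| ≤ C * lam ^ (-(5 : ℝ) / 2) ∧
        s.re < 0 := by
  have hB : 0 < b - τ := sub_pos.mpr hb
  have hb0 : 0 < b := hτ.trans hb
  have hα2 : 0 < α ^ 2 := by positivity
  -- `‖d‖ ≤ K ω⁻³` for the offset `d`; `M ω³` bounds the coefficient of `d²` in the expansion;
  -- `D ω⁻³` bounds the right-hand side of the expansion.
  set K := 3 * α ^ 2 * (1 + τ) / (b - τ) with hK
  set M := (b - τ) + 3 * (b + 7 * τ + 3) with hM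
  set D := K ^ 2 * M + α ^ 2 * τ * K with hD
  have hK0 : 0 < K := by positivity
  have hM0 : 0 < M := by positivity
  have hD0 : 0 < D := by positivity
  refine ⟨D / (2 * (b - τ)), (1 + K + D / α ^ 2) ^ 2, by positivity, by positivity, ?_⟩
  intro lam hlam
  have hL0 : 0 < lam := lt_of_lt_of_le (by positivity) hlam
  obtain ⟨w, hw0, rfl⟩ : ∃ w : ℝ, 0 < w ∧ lam = w ^ 2 :=
    ⟨√lam, Real.sqrt_pos.mpr hL0, (Real.sq_sqrt hL0.le).symm⟩
  have hwb : 1 + K + D / α ^ 2 ≤ w := le_of_sq_le_sq hlam hw0.le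
  have hDα : 0 < D / α ^ 2 := by positivity
  have hw1 : 1 < w := by linarith
  have hw3 : w ≤ w ^ 3 := le_self_pow₀ hw1.le (by norm_num)
  obtain ⟨d, hroot, hdK⟩ := exists_root_offset τ b α w hτ hb hw1.le
  rw [← hK] at hdK
  have hd1 : ‖d‖ ≤ 1 := by
    by_contra! hcon
    nlinarith
  have hexp := root_expansion τ b α w d _ rfl hroot
  have hbd := norm_expansion_le τ b w d _ hτ hb hw1.le hd1 rfl
  rw [← hM] at hbd
  set F := Complex.I * (b - τ) * (w : ℂ) ^ 3 + _ + _ with hF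
  have hrhs : ‖d ^ 2 * F - (α : ℂ) ^ 2 * τ * d‖ * w ^ 3 ≤ D := by
    have h1 : ‖d ^ 2 * F - (α : ℂ) ^ 2 * τ * d‖ ≤ ‖d‖ ^ 2 * (M * w ^ 3) + α ^ 2 * τ * ‖d‖ := by
      refine (norm_sub_le _ _).trans ?_
      rw [norm_mul, norm_mul, norm_mul, norm_pow, norm_pow, Complex.norm_real, Complex.norm_real,
        Real.norm_eq_abs, sq_abs, Real.norm_of_nonneg hτ.le]
      gcongr
    calc _ ≤ (‖d‖ ^ 2 * (M * w ^ 3) + α ^ 2 * τ * ‖d‖) * w ^ 3 := by gcongr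
      _ = (‖d‖ * w ^ 3) ^ 2 * M + α ^ 2 * τ * (‖d‖ * w ^ 3) := by ring
      _ ≤ D := by rw [hD]; gcongr
  have hre : |2 * (b - τ) * w ^ 4 * d.re + α ^ 2| * w ^ 3 ≤ D := by
    refine le_trans ?_ hrhs
    rw [← hexp]
    gcongr
    refine le_trans (le_of_eq ?_) (Complex.abs_re_le_norm _)
    congr 1
    have : 2 * ((b : ℂ) - τ) * (w : ℂ) ^ 4 * d + (α : ℂ) ^ 2 * (1 + τ * Complex.I * w) =
        ((2 * (b - τ) * w ^ 4 : ℝ) : ℂ) * d + ((α ^ 2 : ℝ) : ℂ)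
          + ((α ^ 2 * τ * w : ℝ) : ℂ) * Complex.I := by
      push_cast; ring
    rw [this, Complex.add_re, Complex.add_re, Complex.re_ofReal_mul, Complex.re_ofReal_mul,
      Complex.ofReal_re, Complex.I_re, mul_zero, add_zero]
  have hsre : (Complex.I * w + d).re = d.re := by simp
  refine ⟨Complex.I * w + d, ?_, ?_, ?_⟩
  · rw [hP _ hL0]
    push_cast
    exact hroot
  · have hpow : (w ^ 2) ^ (-(5 : ℝ) / 2) = (w ^ 5)⁻¹ := by
      rw [← Real.rpow_natCast w 2, ← Real.rpow_mul hw0.le, ← Real.rpow_natCast w 5,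
        ← Real.rpow_neg hw0.le]
      norm_num
    have heq : d.re + α ^ 2 / (2 * (b - τ) * (w ^ 2) ^ 2) =
        (2 * (b - τ) * w ^ 4 * d.re + α ^ 2) / (2 * (b - τ) * w ^ 4) := by
      field_simp
    rw [hsre, hpow, heq, abs_div, abs_of_pos (by positivity : 0 < 2 * (b - τ) * w ^ 4),
      ← div_eq_mul_inv, div_div, div_le_div_iff₀ (by positivity) (by positivity)]
    set y := |2 * (b - τ) * w ^ 4 * d.re + α ^ 2|
    have hy : 0 ≤ y := abs_nonneg _
    have hyw : y * w ≤ D := (mul_le_mul_of_nonneg_left hw3 hy).trans hre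
    calc y * (2 * (b - τ) * w ^ 5) = y * w * (2 * (b - τ) * w ^ 4) := by ring
      _ ≤ _ := by gcongr
  · rw [hsre]
    by_contra! hcon
    have h1 : α ^ 2 ≤ |2 * (b - τ) * w ^ 4 * d.re + α ^ 2| := by
      refine le_trans ?_ (le_abs_self _)
      have : 0 ≤ 2 * (b - τ) * w ^ 4 * d.re := by positivity
      linarith
    have h2 : D < α ^ 2 * w := by
      rw [mul_comm, ← div_lt_iff₀ hα2]
      linarith
    have h3 : α ^ 2 * w ≤ |2 * (b - τ) * w ^ 4 * d.re + α ^ 2| * w ^ 3 := by gcongr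
    linarith
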